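/- Let (L,[-,-,-]) be a ternary Leibniz algebra over a field K and (V,λ,μ,ρ) a representation of L on a vector space V. Then the direct sum L ⊕ V is a ternary Leibniz algebra with the bracket [x+u₁, y+u₂, z+u₃] := [x,y,z] + ρ(y,z)(u₁) + μ(x,z)(u₂) + λ(x,y)(u₃), for x,y,z ∈ L and u₁,u₂,u₃ ∈ V. -/

import Mathlib

variable {K : Type*} [Field K] {L : Type*} [AddCommGroup L] [Module K L]
variable {V : Type*} [AddCommGroup V] [Module K V]

/-- The (right) ternary Leibniz identity for a ternary bracket. -/
def TernaryLeibnizId {A : Type*} [AddCommGroup A] (b : A → A → A → A) : Prop :=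
  ∀ x y z t u : A,
    b (b x y z) t u = b x y (b z t u) + b x (b y t u) z + b (b x t u) y z

/-- A representation `(V, λ, μ, ρ)` of a ternary Leibniz algebra `(L, t)` on `V`. -/
def IsTernaryRep (t : L → L → L → L)
    (lam mu rho : L → L → Module.End K V) : Prop :=
  (∀ x y z w : L,
    lam (t x y z) w = lam x y * lam z w + mu x z * lam y w + rho y z * lam x w) ∧
  (∀ x y z w : L,
    mu (t x y z) w = lam x y * mu z w + mu x z * mu y w + rho y z * mu x w) ∧
  (∀ x y z w : L,
    rho z w * lam x y = lam x y * rho z w + lam x (t y z w) + lam (t x z w) y) ∧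
  (∀ x y z w : L,
    rho z w * mu x y = mu x (t y z w) + mu x y * rho z w + mu (t x z w) y) ∧
  (∀ x y z w : L,
    rho z w * rho x y = rho x (t y z w) + rho (t x z w) y + rho x y * rho z w)

section SemidirectBracket

/-- The bracket of the semidirect product on `A × V`, where the pair `(x, u)` stands for `x + u`.
The maps `rho`, `mu`, `lam` act on the `V`-part of the first, second and third argument
respectively. -/
def semidirectBracket {R A V : Type*} [Semiring R] [AddCommMonoid V] [Module R V]
    (t : A → A → A → A) (lam mu rho : A → A → Module.End R V) (p q r : A × V) : A × V :=
  (t p.1 q.1 r.1, rho q.1 r.1 p.2 + mu p.1 r.1 q.2 + lam p.1 q.1 r.2)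

variable {A : Type*} {t : A → A → A → A} {lam mu rho : A → A → Module.End K V}

namespace IsTernaryRep

theorem lam_bracket_apply (h : IsTernaryRep t lam mu rho) (x y z w : A) (v : V) :
    lam (t x y z) w v = lam x y (lam z w v) + mu x z (lam y w v) + rho y z (lam x w v) :=
  LinearMap.congr_fun (h.1 x y z w) v

theorem mu_bracket_apply (h : IsTernaryRep t lam mu rho) (x y z w : A) (v : V) :
    mu (t x y z) w v = lam x y (mu z w v) + mu x z (mu y w v) + rho y z (mu x w v) :=
  LinearMap.congr_fun (h.2.1 x y z w) v

theorem rho_lam_apply (h : IsTernaryRep t lam mu rho) (x y z w : A) (v : V) :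
    rho z w (lam x y v) = lam x y (rho z w v) + lam x (t y z w) v + lam (t x z w) y v :=
  LinearMap.congr_fun (h.2.2.1 x y z w) v

theorem rho_mu_apply (h : IsTernaryRep t lam mu rho) (x y z w : A) (v : V) :
    rho z w (mu x y v) = mu x (t y z w) v + mu x y (rho z w v) + mu (t x z w) y v :=
  LinearMap.congr_fun (h.2.2.2.1 x y z w) v

theorem rho_rho_apply (h : IsTernaryRep t lam mu rho) (x y z w : A) (v : V) :
    rho z w (rho x y v) = rho x (t y z w) v + rho (t x z w) y v + rho x y (rho z w v) :=
  LinearMap.congr_fun (h.2.2.2.2 x y z w) v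

theorem semidirectBracket_leibniz_snd (h : IsTernaryRep t lam mu rho) (p q r m n : A × V) :
    letI b := semidirectBracket t lam mu rho
    (b (b p q r) m n).2 = (b p q (b r m n)).2 + (b p (b q m n) r).2 + (b (b p m n) q r).2 := by
  obtain ⟨x, u₁⟩ := p
  obtain ⟨y, u₂⟩ := q
  obtain ⟨z, u₃⟩ := r
  obtain ⟨w, u₄⟩ := m
  obtain ⟨s, u₅⟩ := n
  simp only [semidirectBracket, map_add]
  -- Each axiom of a representation is the part of the identity that involves one fixed `uᵢ`.
  rw [h.rho_rho_apply y z w s u₁, h.rho_mu_apply x z w s u₂, h.rho_lam_apply x y w s u₃,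
    h.mu_bracket_apply x y z s u₄, h.lam_bracket_apply x y z w u₅]
  abel

end IsTernaryRep

theorem semidirect_product_ternaryLeibniz_general [AddCommGroup A] (ht : TernaryLeibnizId t)
    (hrep : IsTernaryRep t lam mu rho) :
    TernaryLeibnizId (semidirectBracket t lam mu rho) := fun p q r m n =>
  Prod.ext (ht p.1 q.1 r.1 m.1 n.1) (hrep.semidirectBracket_leibniz_snd p q r m n)

end SemidirectBracket

/-- Given a representation `(V, λ, μ, ρ)` of a ternary Leibniz algebra `(L, [-,-,-])`, the
direct sum `L ⊕ V` is a ternary Leibniz algebra with bracket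
`[x+u₁, y+u₂, z+u₃] := [x,y,z] + ρ(y,z)(u₁) + μ(x,z)(u₂) + λ(x,y)(u₃)`. -/
theorem semidirect_product_ternaryLeibniz (t : L →ₗ[K] L →ₗ[K] L →ₗ[K] L)
    (ht : TernaryLeibnizId fun x y z => t x y z)
    (lam mu rho : L →ₗ[K] L →ₗ[K] Module.End K V)
    (hrep : IsTernaryRep (fun x y z => t x y z)
      (fun x y => lam x y) (fun x y => mu x y) (fun x y => rho x y)) :
    TernaryLeibnizId fun p q r : L × V =>
      (t p.1 q.1 r.1, rho q.1 r.1 p.2 + mu p.1 r.1 q.2 + lam p.1 q.1 r.2) :=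
  semidirect_product_ternaryLeibniz_general ht hrep
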